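/- arXiv:1608.00107 — 2 statements merged into one kernel-verified Lean document; each statement's English description precedes it below -/
import Mathlib

section
/- Let g : ℝ → [0,∞) be a probability density on ℝ with cumulative distribution function G(x) = ∫_{−∞}^{x} g(t) dt, and consider the location–scale family with density f(x | μ, τ) = τ⁻¹ g((x − μ)/τ) and cdf F(x | μ, τ) = G((x − μ)/τ), for μ ∈ ℝ and τ > 0. Fix 0 < p̲ < p̄ < 1 and points q̲ < q̄ with G(q̲) = p̲ and G(q̄) = p̄, and assume g is positive and continuous on a neighbourhood of q̲ and on a neighbourhood of q̄. For integers 1 ≤ l < u ≤ m and x̲ ≤ x̄ define f⋆(x̲, x̄ | μ, τ, m, l, u) = [m!/((l−1)!(u−l−1)!(m−u)!)] · F(x̲|μ,τ)^{l−1} · (F(x̄|μ,τ) − F(x̲|μ,τ))^{u−l−1} · (1 − F(x̄|μ,τ))^{m−u} · f(x̲|μ,τ) · f(x̄|μ,τ). Let π : ℝ × (0,∞) → [0,∞) be a twice continuously differentiable probability density such that ∫₀^∞ ∫_ℝ f⋆(x̲, x̄ | μ, τ, m, l, u) π(μ, τ) dμ dτ < ∞ for all m and all 1 ≤ l < u ≤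 m. Let (l_m) and (u_m) be integer sequences with 1 ≤ l_m < u_m ≤ m, l_m/(m+1) → p̲ and u_m/(m+1) → p̄ as m → ∞. Then for all x̲ < x̄, setting τ* = (x̄ − x̲)/(q̄ − q̲) and μ* = x̲ − τ*·q̲, one has lim_{m→∞} ∫₀^∞ ∫_ℝ f⋆(x̲, x̄ | μ, τ, m, l_m, u_m) π(μ, τ) dμ dτ = π(μ*, τ*)/(q̄ − q̲). -/
open MeasureTheory Filter

/-- The location–scale density `f(x | μ, τ) = τ⁻¹ g((x − μ)/τ)`. -/
noncomputable def locScalePDF (g : ℝ → ℝ) (μ τ x : ℝ) : ℝ := τ⁻¹ * g ((x - μ) / τ)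

/-- The location–scale cdf `F(x | μ, τ) = G((x − μ)/τ)`. -/
noncomputable def locScaleCDF (G : ℝ → ℝ) (μ τ x : ℝ) : ℝ := G ((x - μ) / τ)

/-- The joint density `f⋆(x̲, x̄ | μ, τ, m, l, u)` of the `l`-th and `u`-th order
statistics of `m` i.i.d. samples from the location–scale family:
`[m!/((l−1)!(u−l−1)!(m−u)!)] F(x̲)^{l−1} (F(x̄)−F(x̲))^{u−l−1} (1−F(x̄))^{m−u} f(x̲) f(x̄)`. -/
noncomputable def orderStatLik (g G : ℝ → ℝ) (m l u : ℕ) (μ τ xl xu : ℝ) : ℝ :=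
  ((m.factorial : ℝ) /
      (((l - 1).factorial : ℝ) * ((u - l - 1).factorial : ℝ) * ((m - u).factorial : ℝ))) *
    locScaleCDF G μ τ xl ^ (l - 1) *
    (locScaleCDF G μ τ xu - locScaleCDF G μ τ xl) ^ (u - l - 1) *
    (1 - locScaleCDF G μ τ xu) ^ (m - u) *
    locScalePDF g μ τ xl * locScalePDF g μ τ xu

lemma aux_beta (i : ℕ) : ∀ (j : ℕ) (t : ℝ),
    ∫ s in (0:ℝ)..t, s ^ i * (t - s) ^ j
      = t ^ (i + j + 1) * ((i.factorial : ℝ) * j.factorial / (i + j + 1).factorial) := by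
  induction i with
  | zero =>
    intro j t
    have h : ∀ s ∈ Set.uIcc (0:ℝ) t, HasDerivAt (fun s => -((t - s) ^ (j + 1) / (j + 1)))
        (s ^ 0 * (t - s) ^ j) s := by
      intro s _
      have h1 : HasDerivAt (fun s : ℝ => t - s) (-1) s := by
        simpa using (hasDerivAt_id s).const_sub t
      have h2 := ((h1.pow (j + 1)).div_const ((j : ℝ) + 1)).neg
      refine h2.congr_deriv ?_
      have : (j : ℝ) + 1 ≠ 0 := by positivity
      push_cast
      simp
      field_simp
    rw [intervalIntegral.integral_eq_sub_of_hasDerivAt h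
      ((by fun_prop : Continuous fun s : ℝ => s ^ 0 * (t - s) ^ j).intervalIntegrable _ _)]
    have : (j : ℝ) + 1 ≠ 0 := by positivity
    have h2 : (j.factorial : ℝ) ≠ 0 := by positivity
    simp [Nat.factorial_succ]
    field_simp
  | succ i ih =>
    intro j t
    have h : ∀ s ∈ Set.uIcc (0:ℝ) t, HasDerivAt (fun s => s ^ (i + 1) * (t - s) ^ (j + 1))
        (((i : ℝ) + 1) * (s ^ i * (t - s) ^ (j + 1)) -
          ((j : ℝ) + 1) * (s ^ (i + 1) * (t - s) ^ j)) s := by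
      intro s _
      have h1 : HasDerivAt (fun s : ℝ => t - s) (-1) s := by
        simpa using (hasDerivAt_id s).const_sub t
      have h2 := ((hasDerivAt_id s).pow (i + 1)).mul (h1.pow (j + 1))
      refine h2.congr_deriv ?_
      push_cast
      simp
      ring
    have hc1 : IntervalIntegrable (fun s : ℝ => ((i : ℝ) + 1) * (s ^ i * (t - s) ^ (j + 1)))
      volume 0 t := (by fun_prop : Continuous _).intervalIntegrable _ _
    have hc2 : IntervalIntegrable (fun s : ℝ => ((j : ℝ) + 1) * (s ^ (i + 1) * (t - s) ^ j))
      volume 0 t := (by fun_prop : Continuous _).intervalIntegrable _ _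
    have h3 := intervalIntegral.integral_eq_sub_of_hasDerivAt h (hc1.sub hc2)
    rw [intervalIntegral.integral_sub hc1 hc2, intervalIntegral.integral_const_mul,
      intervalIntegral.integral_const_mul, ih] at h3
    simp at h3
    have hj : (j : ℝ) + 1 ≠ 0 := by positivity
    have h4 : ((j : ℝ) + 1) * ∫ s in (0:ℝ)..t, s ^ (i + 1) * (t - s) ^ j
      = ((j : ℝ) + 1) * (t ^ (i + 1 + j + 1) *
        (((i + 1).factorial : ℝ) * j.factorial / (i + 1 + j + 1).factorial)) := by
      rw [show i + (j + 1) + 1 = i + 1 + j + 1 by ring] at h3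
      rw [← sub_eq_zero.mp h3, Nat.factorial_succ j, Nat.factorial_succ i]
      push_cast
      ring
    exact mul_left_cancel₀ hj h4

lemma aux_binom (i j : ℕ) (x y : ℝ) (hx : 0 ≤ x) (hy : 0 ≤ y) :
    ((i + j).factorial : ℝ) / (i.factorial * j.factorial) * (x ^ i * y ^ j) ≤ (x + y) ^ (i + j) := by
  rw [add_pow]
  have h := Finset.single_le_sum (f := fun m => x ^ m * y ^ (i + j - m) * ((i + j).choose m : ℝ))
    (s := Finset.range (i + j + 1)) (fun m _ => by positivity) (a := i)
    (Finset.mem_range.2 (by omega))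
  refine le_trans (le_of_eq ?_) h
  have := Nat.add_choose_mul_factorial_mul_factorial i j
  have h2 : ((i + j).choose i : ℝ) * i.factorial * j.factorial = (i + j).factorial := by
    rw [Nat.choose_symm_add] at *; exact_mod_cast this
  have h3 : (j.factorial : ℝ) ≠ 0 := by positivity
  have h4 : (i.factorial : ℝ) ≠ 0 := by positivity
  simp only [Nat.add_sub_cancel_left]
  rw [← h2]
  field_simp

lemma aux_multinom (i j k : ℕ) (x y z : ℝ) (hx : 0 ≤ x) (hy : 0 ≤ y) (hz : 0 ≤ z)
    (h : x + y + z = 1) :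
    ((i + j + k).factorial : ℝ) / (i.factorial * j.factorial * k.factorial)
      * (x ^ i * y ^ j * z ^ k) ≤ 1 := by
  have h1 := aux_binom i j x y hx hy
  have h2 := aux_binom (i + j) k (x + y) z (by positivity) hz
  rw [h, one_pow] at h2
  refine le_trans ?_ h2
  have h3 : (j.factorial : ℝ) ≠ 0 := by positivity
  have h4 : (i.factorial : ℝ) ≠ 0 := by positivity
  have h5 : ((i + j).factorial : ℝ) ≠ 0 := by positivity
  calc _ = ((i + j + k).factorial : ℝ) / ((i + j).factorial * k.factorial) *
        ((((i + j).factorial : ℝ) / (i.factorial * j.factorial) * (x ^ i * y ^ j)) * z ^ k) := by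
        field_simp
    _ ≤ _ := by gcongr

/-- AM-GM with natural exponents. -/
lemma aux_amgm (i j k : ℕ) (hn : 0 < i + j + k) (x y z : ℝ) (hx : 0 ≤ x) (hy : 0 ≤ y)
    (hz : 0 ≤ z) :
    x ^ i * y ^ j * z ^ k ≤
      ((i : ℝ) / ((i + j + k : ℕ) : ℝ) * x + (j : ℝ) / ((i + j + k : ℕ) : ℝ) * y
        + (k : ℝ) / ((i + j + k : ℕ) : ℝ) * z) ^ (i + j + k) := by
  set n := i + j + k with hndef
  have hn' : (0 : ℝ) < n := by exact_mod_cast hn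
  have h := Real.geom_mean_le_arith_mean3_weighted (w₁ := (i : ℝ) / n) (w₂ := (j : ℝ) / n)
    (w₃ := (k : ℝ) / n) (p₁ := x) (p₂ := y) (p₃ := z) (by positivity) (by positivity)
    (by positivity) hx hy hz (by
      have : (i : ℝ) + j + k = n := by rw [hndef]; push_cast; ring
      field_simp; exact this)
  have h2 := pow_le_pow_left₀ (by positivity) h n
  refine le_trans (le_of_eq ?_) h2
  have key : ∀ (a : ℝ) (e : ℕ), 0 ≤ a → (a ^ ((e : ℝ) / n)) ^ n = a ^ e := by
    intro a e ha
    rw [← Real.rpow_natCast, ← Real.rpow_mul ha, div_mul_cancel₀ _ hn'.ne', Real.rpow_natCast]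
  rw [mul_pow, mul_pow, key x i hx, key y j hy, key z k hz]

lemma aux_sqrt_sum (α β γ a b c δ : ℝ) (hα : 0 ≤ α) (hβ : 0 ≤ β) (hγ : 0 ≤ γ)
    (ha : 0 ≤ a) (hb : 0 ≤ b) (hc : 0 ≤ c) (h1 : α + β + γ = 1) (h2 : a + b + c = 1)
    (hδ : 0 ≤ δ) (h : δ ≤ |a - α| ∨ δ ≤ |c - γ|) :
    √(α * a) + √(β * b) + √(γ * c) ≤ 1 - δ ^ 2 / 8 := by
  have key : ∀ x y : ℝ, 0 ≤ x → 0 ≤ y → x ≤ 1 → y ≤ 1 → δ ≤ |y - x| →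
      δ ^ 2 / 4 ≤ (√x - √y) ^ 2 := by
    intro x y hx hy hx1 hy1 hd
    have e1 : δ ^ 2 ≤ (y - x) ^ 2 := by rw [← sq_abs (y - x)]; gcongr
    have e2 : (y - x) ^ 2 = (√x - √y) ^ 2 * (√x + √y) ^ 2 := by
      have := Real.sq_sqrt hx
      have := Real.sq_sqrt hy
      nth_rewrite 1 [← Real.sq_sqrt hx, ← Real.sq_sqrt hy]
      ring
    have hxs : √x ≤ 1 := Real.sqrt_le_one.mpr hx1
    have hys : √y ≤ 1 := Real.sqrt_le_one.mpr hy1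
    have e3 : (√x + √y) ^ 2 ≤ 4 := by
      have := Real.sqrt_nonneg x
      have := Real.sqrt_nonneg y
      nlinarith
    nlinarith [sq_nonneg (√x - √y)]
  rw [Real.sqrt_mul hα, Real.sqrt_mul hβ, Real.sqrt_mul hγ]
  have e1 := Real.sq_sqrt hα
  have e2 := Real.sq_sqrt hβ
  have e3 := Real.sq_sqrt hγ
  have f1 := Real.sq_sqrt ha
  have f2 := Real.sq_sqrt hb
  have f3 := Real.sq_sqrt hc
  rcases h with h | h
  · have := key α a hα ha (by linarith) (by linarith) h
    nlinarith [sq_nonneg (√β - √b), sq_nonneg (√γ - √c)]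
  · have := key γ c hγ hc (by linarith) (by linarith) h
    nlinarith [sq_nonneg (√β - √b), sq_nonneg (√α - √a)]

lemma aux_bound (i j k : ℕ) (hn : 0 < i + j + k) (α β γ a b c η ρ : ℝ) (hα : 0 < α) (hβ : 0 < β)
    (hγ : 0 < γ) (ha : 0 ≤ a) (hb : 0 ≤ b) (hc : 0 ≤ c) (h1 : α + β + γ = 1)
    (hη : 0 ≤ η)
    (hi : (i : ℝ) / ((i + j + k : ℕ) : ℝ) ≤ (1 + η) * α)
    (hj : (j : ℝ) / ((i + j + k : ℕ) : ℝ) ≤ (1 + η) * β)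
    (hk : (k : ℝ) / ((i + j + k : ℕ) : ℝ) ≤ (1 + η) * γ)
    (hρ : √(α * a) + √(β * b) + √(γ * c) ≤ ρ) :
    ((i + j + k).factorial : ℝ) / (i.factorial * j.factorial * k.factorial)
      * (a ^ i * b ^ j * c ^ k) ≤ (((1 + η) * ρ) ^ 2) ^ (i + j + k) := by
  have hm := aux_multinom i j k α β γ hα.le hβ.le hγ.le h1
  have hg := aux_amgm i j k hn √(a / α) √(b / β) √(c / γ) (by positivity) (by positivity)
    (by positivity)
  have hs : ∀ x y : ℝ, 0 < x → 0 ≤ y → x * √(y / x) = √(x * y) := by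
    intro x y hx hy
    have hx' := Real.sq_sqrt hx.le
    have hx0 : 0 < √x := Real.sqrt_pos.2 hx
    rw [Real.sqrt_div hy, Real.sqrt_mul hx.le]
    field_simp
    rw [hx', mul_comm]
  have hle : (i : ℝ) / ((i + j + k : ℕ) : ℝ) * √(a / α) + (j : ℝ) / ((i + j + k : ℕ) : ℝ) * √(b / β)
      + (k : ℝ) / ((i + j + k : ℕ) : ℝ) * √(c / γ) ≤ (1 + η) * ρ := by
    calc _ ≤ (1 + η) * α * √(a / α) + (1 + η) * β * √(b / β) + (1 + η) * γ * √(c / γ) := by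
          gcongr
      _ = (1 + η) * (α * √(a / α) + β * √(b / β) + γ * √(c / γ)) := by ring
      _ = (1 + η) * (√(α * a) + √(β * b) + √(γ * c)) := by
          rw [hs α a hα ha, hs β b hβ hb, hs γ c hγ hc]
      _ ≤ _ := by gcongr
  have hg2 : √(a / α) ^ i * √(b / β) ^ j * √(c / γ) ^ k ≤ ((1 + η) * ρ) ^ (i + j + k) :=
    hg.trans (by gcongr)
  have hp : ∀ (x y : ℝ) (e : ℕ), 0 < x → 0 ≤ y → y ^ e = x ^ e * (√(y / x) ^ e) ^ 2 := by
    intro x y e hx hy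
    rw [← pow_mul, mul_comm e 2, pow_mul, Real.sq_sqrt (by positivity), ← mul_pow]
    field_simp
  rw [hp α a i hα ha, hp β b j hβ hb, hp γ c k hγ hc]
  calc _ = (((i + j + k).factorial : ℝ) / (i.factorial * j.factorial * k.factorial)
      * (α ^ i * β ^ j * γ ^ k)) * (√(a / α) ^ i * √(b / β) ^ j * √(c / γ) ^ k) ^ 2 := by ring
    _ ≤ 1 * (((1 + η) * ρ) ^ (i + j + k)) ^ 2 := by gcongr
    _ = _ := by rw [one_mul, ← pow_mul, ← pow_mul, mul_comm 2]

lemma aux_decay (i j k : ℕ → ℕ) (hn : ∀ᶠ m in atTop, i m + j m + k m + 2 = m)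
    (α β γ : ℝ) (hα : 0 < α) (hβ : 0 < β) (hγ : 0 < γ) (h1 : α + β + γ = 1)
    (hi : Tendsto (fun m => (i m : ℝ) / ((i m + j m + k m : ℕ) : ℝ)) atTop (nhds α))
    (hj : Tendsto (fun m => (j m : ℝ) / ((i m + j m + k m : ℕ) : ℝ)) atTop (nhds β))
    (hk : Tendsto (fun m => (k m : ℝ) / ((i m + j m + k m : ℕ) : ℝ)) atTop (nhds γ))
    (δ : ℝ) (hδ : 0 < δ) (hδ1 : δ < 1) (ε : ℝ) (hε : 0 < ε) :
    ∀ᶠ m in atTop, ∀ a b c : ℝ, 0 ≤ a → 0 ≤ b → 0 ≤ c → a + b + c = 1 →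
      (δ ≤ |a - α| ∨ δ ≤ |c - γ|) →
      (m.factorial : ℝ) / ((i m).factorial * (j m).factorial * (k m).factorial)
      * (a ^ i m * b ^ j m * c ^ k m) < ε := by
  set η := δ ^ 2 / 8 with hη
  have hη0 : 0 < η := by positivity
  have hη1 : η < 1 := by rw [hη]; nlinarith
  set r := ((1 + η) * (1 - η)) ^ 2 with hr
  have hr0 : 0 ≤ r := by positivity
  have hr1 : r < 1 := by
    have : (1 + η) * (1 - η) < 1 := by nlinarith
    have : 0 ≤ (1 + η) * (1 - η) := mul_nonneg (by linarith) (by linarith)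
    rw [hr]; nlinarith
  have hlim : Tendsto (fun n : ℕ => ((n : ℝ) + 2) * ((n : ℝ) + 1) * r ^ n) atTop (nhds 0) := by
    have e2 := tendsto_pow_const_mul_const_pow_of_lt_one 2 hr0 hr1
    have e1 := tendsto_pow_const_mul_const_pow_of_lt_one 1 hr0 hr1
    have e0 := tendsto_pow_const_mul_const_pow_of_lt_one 0 hr0 hr1
    have := (e2.add (e1.const_mul 3)).add (e0.const_mul 2)
    simp only [mul_zero, add_zero] at this
    refine this.congr fun n => ?_
    ring
  have hlim2 : Tendsto (fun m : ℕ => m - 2) atTop atTop := tendsto_sub_atTop_nat 2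
  have hlt : ∀ x : ℝ, 0 < x → x < (1 + η) * x := fun x hx => by nlinarith
  filter_upwards [hn, (hlim.comp hlim2).eventually_lt_const hε, eventually_gt_atTop 2,
    hi.eventually_lt_const (hlt α hα), hj.eventually_lt_const (hlt β hβ),
    hk.eventually_lt_const (hlt γ hγ)] with m hm hmε hm2 hmi hmj hmk a b c ha hb hc habc hd
  have hs := aux_sqrt_sum α β γ a b c δ hα.le hβ.le hγ.le ha hb hc h1 habc hδ.le hd
  have hb := aux_bound (i m) (j m) (k m) (by omega) α β γ a b c η (1 - η) hα hβ hγ ha hb hc h1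
    hη0.le hmi.le hmj.le hmk.le hs
  refine lt_of_le_of_lt ?_ hmε
  have hmn : m - 2 = i m + j m + k m := by omega
  simp only [Function.comp, hmn]
  have hf : (m.factorial : ℝ) = (((i m + j m + k m : ℕ) : ℝ) + 2) * (((i m + j m + k m : ℕ) : ℝ) + 1)
      * (i m + j m + k m).factorial := by
    conv_lhs => rw [← hm]
    rw [Nat.factorial_succ, Nat.factorial_succ]
    push_cast
    ring
  calc _ = (((i m + j m + k m : ℕ) : ℝ) + 2) * (((i m + j m + k m : ℕ) : ℝ) + 1) *
      (((i m + j m + k m).factorial : ℝ) / ((i m).factorial * (j m).factorial * (k m).factorial)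
      * (a ^ i m * b ^ j m * c ^ k m)) := by rw [hf]; ring
    _ ≤ _ := by gcongr

lemma aux_dirichlet (i j k : ℕ) :
    ∫ q in {q : ℝ × ℝ | q.1 < q.2}, q.1 ^ i * (q.2 - q.1) ^ j * (1 - q.2) ^ k
      ∂((volume.restrict (Set.Icc (0:ℝ) 1)).prod (volume.restrict (Set.Icc (0:ℝ) 1)))
      = (i.factorial * j.factorial * k.factorial : ℝ) / (i + j + k + 2).factorial := by
  have hS : MeasurableSet {q : ℝ × ℝ | q.1 < q.2} := measurableSet_lt measurable_fst measurable_snd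
  rw [← integral_indicator hS, integral_prod_symm]
  · have inner : ∀ t ∈ Set.Icc (0:ℝ) 1, ∫ s in Set.Icc (0:ℝ) 1,
        Set.indicator {q : ℝ × ℝ | q.1 < q.2}
          (fun q => q.1 ^ i * (q.2 - q.1) ^ j * (1 - q.2) ^ k) (s, t)
        = ((i.factorial : ℝ) * j.factorial / (i + j + 1).factorial) *
          (t ^ (i + j + 1) * (1 - t) ^ k) := by
      intro t ht
      have : (fun s => Set.indicator {q : ℝ × ℝ | q.1 < q.2}
          (fun q => q.1 ^ i * (q.2 - q.1) ^ j * (1 - q.2) ^ k) (s, t))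
          = Set.indicator (Set.Iio t) (fun s => s ^ i * (t - s) ^ j * (1 - t) ^ k) := by
        ext s
        simp [Set.indicator]
      rw [this, setIntegral_indicator measurableSet_Iio]
      have hset : Set.Icc (0:ℝ) 1 ∩ Set.Iio t = Set.Ico 0 t := by
        ext s
        simp only [Set.mem_inter_iff, Set.mem_Icc, Set.mem_Iio, Set.mem_Ico]
        constructor
        · rintro ⟨⟨h1, _⟩, h3⟩; exact ⟨h1, h3⟩
        · rintro ⟨h1, h2⟩; exact ⟨⟨h1, h2.le.trans ht.2⟩, h2⟩
      rw [hset, integral_Ico_eq_integral_Ioc, ← intervalIntegral.integral_of_le ht.1,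
        intervalIntegral.integral_mul_const, aux_beta]
      ring
    rw [setIntegral_congr_fun measurableSet_Icc inner, integral_Icc_eq_integral_Ioc,
      ← intervalIntegral.integral_of_le zero_le_one, intervalIntegral.integral_const_mul, aux_beta]
    rw [show i + j + 1 + k + 1 = i + j + k + 2 by ring]
    have : ((i + j + 1).factorial : ℝ) ≠ 0 := by positivity
    field_simp
    simp
  · rw [Measure.prod_restrict]
    refine Integrable.indicator ?_ hS
    have : ContinuousOn (fun q : ℝ × ℝ => q.1 ^ i * (q.2 - q.1) ^ j * (1 - q.2) ^ k)
      (Set.Icc (0:ℝ) 1 ×ˢ Set.Icc (0:ℝ) 1) := by fun_prop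
    exact this.integrableOn_compact (isCompact_Icc.prod isCompact_Icc)

lemma aux_pit (P : Measure ℝ) [IsProbabilityMeasure P] (G : ℝ → ℝ) (hGc : Continuous G)
    (hG : ∀ x, G x = P.real (Set.Iic x)) :
    P.map G = volume.restrict (Set.Icc (0:ℝ) 1) := by
  have hcdf : (ProbabilityTheory.cdf P : ℝ → ℝ) = G := by
    ext x; rw [hG, ProbabilityTheory.cdf_eq_real]
  have hbot : Tendsto G atBot (nhds 0) := hcdf ▸ ProbabilityTheory.tendsto_cdf_atBot P
  have htop : Tendsto G atTop (nhds 1) := hcdf ▸ ProbabilityTheory.tendsto_cdf_atTop P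
  have hmono : Monotone G := hcdf ▸ ProbabilityTheory.monotone_cdf P
  have hG0 : ∀ x, 0 ≤ G x := fun x => by rw [hG]; positivity
  have hG1 : ∀ x, G x ≤ 1 := fun x => by rw [hG]; exact measureReal_le_one
  have hex : ∀ s, 0 < s → s < 1 → ∃ x, G x = s := by
    intro s h0 h1
    obtain ⟨a, ha⟩ := (hbot.eventually_lt_const h0).exists
    obtain ⟨b, hb⟩ := (htop.eventually_const_lt h1).exists
    exact mem_range_of_exists_le_of_exists_ge hGc ⟨a, ha.le⟩ ⟨b, hb.le⟩
  have : IsFiniteMeasure (P.map G) := inferInstance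
  have hv : ∀ s : ℝ, 0 ≤ s → s ≤ 1 →
      volume.restrict (Set.Icc (0:ℝ) 1) (Set.Iic s) = ENNReal.ofReal s := by
    intro s h0 h1
    rw [Measure.restrict_apply measurableSet_Iic]
    have : Set.Iic s ∩ Set.Icc 0 1 = Set.Icc 0 s := by
      ext y
      simp only [Set.mem_inter_iff, Set.mem_Icc, Set.mem_Iic]
      constructor
      · rintro ⟨h, h', _⟩; exact ⟨h', h⟩
      · rintro ⟨h, h'⟩; exact ⟨h', h, h'.trans h1⟩
    rw [this, Real.volume_Icc, sub_zero]
  refine Measure.ext_of_Iic _ _ fun s => ?_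
  rw [Measure.map_apply hGc.measurable measurableSet_Iic]
  rcases lt_or_ge s 0 with hs | hs
  · have e1 : G ⁻¹' Set.Iic s = ∅ := by
      ext x; simp only [Set.mem_preimage, Set.mem_Iic, Set.mem_empty_iff_false, iff_false, not_le]
      exact hs.trans_le (hG0 x)
    have e2 : Set.Iic s ∩ Set.Icc (0:ℝ) 1 = ∅ := by
      ext x; simp only [Set.mem_inter_iff, Set.mem_Iic, Set.mem_Icc, Set.mem_empty_iff_false,
        iff_false]
      rintro ⟨h, h', _⟩; linarith
    rw [e1, Measure.restrict_apply measurableSet_Iic, e2]; simp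
  rcases le_or_gt 1 s with hs1 | hs1
  · have e1 : G ⁻¹' Set.Iic s = Set.univ := by
      ext x; simp only [Set.mem_preimage, Set.mem_Iic, Set.mem_univ, iff_true]
      exact (hG1 x).trans hs1
    have e2 : Set.Iic s ∩ Set.Icc (0:ℝ) 1 = Set.Icc 0 1 := by
      apply Set.inter_eq_right.2
      intro x hx; exact hx.2.trans hs1
    rw [e1, Measure.restrict_apply measurableSet_Iic, e2]; simp
  rw [hv s hs hs1.le, ← ofReal_measureReal]
  congr 1
  apply le_antisymm
  · refine le_of_forall_gt_imp_ge_of_dense fun s' hs' => ?_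
    rcases le_or_gt 1 s' with h1 | h1
    · exact measureReal_le_one.trans h1
    obtain ⟨x, hx⟩ := hex s' (hs.trans_lt hs') h1
    rw [← hx, hG x]
    refine measureReal_mono ?_
    intro y hy
    by_contra hyx
    have h2 : x ≤ y := (not_le.1 hyx).le
    have h3 := hmono h2
    simp only [Set.mem_preimage, Set.mem_Iic] at hy
    linarith
  · rcases hs.eq_or_lt with h0 | h0
    · rw [← h0]; positivity
    obtain ⟨x, hx⟩ := hex s h0 hs1
    nth_rewrite 1 [← hx]
    rw [hG x]
    refine measureReal_mono ?_
    intro y hy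
    simp only [Set.mem_preimage, Set.mem_Iic]
    rw [← hx]; exact hmono hy

/-- Standardized coordinates to location-scale parameters. -/
noncomputable def auxT (xl d : ℝ) (p : ℝ × ℝ) : ℝ × ℝ :=
  (xl - d / (p.2 - p.1) * p.1, d / (p.2 - p.1))

noncomputable def auxT' (d : ℝ) (p : ℝ × ℝ) : ℝ × ℝ →L[ℝ] ℝ × ℝ :=
  (Matrix.toLin (.finTwoProd ℝ) (.finTwoProd ℝ)
    !![-(d * p.2 / (p.2 - p.1) ^ 2), d * p.1 / (p.2 - p.1) ^ 2;
      d / (p.2 - p.1) ^ 2, -(d / (p.2 - p.1) ^ 2)]).toContinuousLinearMap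

lemma auxT_hasFDerivAt (xl d : ℝ) (p : ℝ × ℝ) (hp : p.1 < p.2) :
    HasFDerivAt (auxT xl d) (auxT' d p) p := by
  have hne : p.2 - p.1 ≠ 0 := (sub_pos.2 hp).ne'
  unfold auxT'
  rw [Matrix.toLin_finTwoProd_toContinuousLinearMap]
  have h1 : HasFDerivAt (fun p : ℝ × ℝ => p.2 - p.1)
      (ContinuousLinearMap.snd ℝ ℝ ℝ - ContinuousLinearMap.fst ℝ ℝ ℝ) p :=
    hasFDerivAt_snd.sub hasFDerivAt_fst
  have h2 := ((hasDerivAt_inv hne).comp_hasFDerivAt p h1).const_mul d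
  have h3 := (h2.mul (hasFDerivAt_fst (𝕜 := ℝ) (p := p))).const_sub xl
  have h4 := h3.prodMk h2
  refine (h4.congr_fderiv ?_).congr_of_eventuallyEq (Eventually.of_forall fun q => ?_)
  · ext <;> (simp; field_simp; try ring)
  · simp [auxT, div_eq_mul_inv]

lemma auxT'_det (d : ℝ) (p : ℝ × ℝ) (hp : p.1 < p.2) :
    (auxT' d p).det = d ^ 2 / (p.2 - p.1) ^ 3 := by
  have hne : p.2 - p.1 ≠ 0 := (sub_pos.2 hp).ne'
  unfold auxT'
  simp only [LinearMap.det_toContinuousLinearMap, LinearMap.det_toLin,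
    Matrix.det_fin_two_of]
  field_simp

lemma auxT_z (xl xu : ℝ) (hx : xl < xu) (p : ℝ × ℝ) (hp : p.1 < p.2) :
    (xl - (auxT xl (xu - xl) p).1) / (auxT xl (xu - xl) p).2 = p.1 ∧
    (xu - (auxT xl (xu - xl) p).1) / (auxT xl (xu - xl) p).2 = p.2 := by
  have hne : p.2 - p.1 ≠ 0 := (sub_pos.2 hp).ne'
  have hne' : xu - xl ≠ 0 := (sub_pos.2 hx).ne'
  simp only [auxT]
  constructor
  · field_simp; ring
  · field_simp; ring

lemma auxT_injOn (xl xu : ℝ) (hx : xl < xu) :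
    Set.InjOn (auxT xl (xu - xl)) {p : ℝ × ℝ | p.1 < p.2} := by
  intro p hp q hq h
  have h1 := auxT_z xl xu hx p hp
  have h2 := auxT_z xl xu hx q hq
  rw [h] at h1
  ext
  · rw [← h1.1, h2.1]
  · rw [← h1.2, h2.2]

lemma auxT_image (xl xu : ℝ) (hx : xl < xu) :
    auxT xl (xu - xl) '' {p : ℝ × ℝ | p.1 < p.2} = {q : ℝ × ℝ | 0 < q.2} := by
  ext q
  constructor
  · rintro ⟨p, hp, rfl⟩
    exact div_pos (sub_pos.2 hx) (sub_pos.2 hp)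
  · intro hq
    have hq' : (0 : ℝ) < q.2 := hq
    have hne' : xu - xl ≠ 0 := (sub_pos.2 hx).ne'
    refine ⟨((xl - q.1) / q.2, (xu - q.1) / q.2), ?_, ?_⟩
    · simp only [Set.mem_ofPred_eq]; gcongr
    · have e : (xu - q.1) / q.2 - (xl - q.1) / q.2 = (xu - xl) / q.2 := by ring
      ext
      · simp only [auxT, e]; field_simp; ring
      · simp only [auxT, e]; field_simp

/-- The Dirichlet kernel. -/
noncomputable def auxK (m l u : ℕ) (s t : ℝ) : ℝ :=
  ((m.factorial : ℝ) /
      (((l - 1).factorial : ℝ) * ((u - l - 1).factorial : ℝ) * ((m - u).factorial : ℝ))) *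
    (s ^ (l - 1) * (t - s) ^ (u - l - 1) * (1 - t) ^ (m - u))

lemma aux_pointwise (g G : ℝ → ℝ) (π : ℝ × ℝ → ℝ) (hg : ∀ x, 0 ≤ g x) (m l u : ℕ) (xl xu : ℝ)
    (hx : xl < xu) (p : ℝ × ℝ) (hp : p.1 < p.2) :
    |(auxT' (xu - xl) p).det| • (orderStatLik g G m l u (auxT xl (xu - xl) p).1
        (auxT xl (xu - xl) p).2 xl xu * π (auxT xl (xu - xl) p))
      = (ENNReal.ofReal (g p.1) * ENNReal.ofReal (g p.2)).toReal •
        (auxK m l u (G p.1) (G p.2) • (π (auxT xl (xu - xl) p) / (p.2 - p.1))) := by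
  have hne : 0 < p.2 - p.1 := sub_pos.2 hp
  have hne' : 0 < xu - xl := sub_pos.2 hx
  obtain ⟨h1, h2⟩ := auxT_z xl xu hx p hp
  rw [auxT'_det _ _ hp, abs_of_pos (by positivity)]
  simp only [orderStatLik, locScaleCDF, locScalePDF, h1, h2, ENNReal.toReal_mul,
    ENNReal.toReal_ofReal (hg _), smul_eq_mul, auxK]
  have h3 : (auxT xl (xu - xl) p).2⁻¹ = (p.2 - p.1) / (xu - xl) := by simp [auxT]
  rw [h3]
  generalize π (auxT xl (xu - xl) p) = y
  field_simp

lemma aux_change (g G : ℝ → ℝ) (π : ℝ × ℝ → ℝ) (hg : ∀ x, 0 ≤ g x) (hgm : Measurable g)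
    (m l u : ℕ) (xl xu : ℝ) (hx : xl < xu) :
    ∫ q in {q : ℝ × ℝ | 0 < q.2}, orderStatLik g G m l u q.1 q.2 xl xu * π q
      = ∫ p in {p : ℝ × ℝ | p.1 < p.2}, auxK m l u (G p.1) (G p.2) •
        (π (auxT xl (xu - xl) p) / (p.2 - p.1))
        ∂((volume.withDensity fun x => ENNReal.ofReal (g x)).prod
          (volume.withDensity fun x => ENNReal.ofReal (g x))) := by
  have hS : MeasurableSet {p : ℝ × ℝ | p.1 < p.2} := measurableSet_lt measurable_fst measurable_snd
  rw [← auxT_image xl xu hx, integral_image_eq_integral_abs_det_fderiv_smul volume hS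
    (fun p hp => (auxT_hasFDerivAt xl (xu - xl) p hp).hasFDerivWithinAt) (auxT_injOn xl xu hx),
    prod_withDensity (by fun_prop) (by fun_prop),
    setIntegral_withDensity_eq_setIntegral_toReal_smul (by fun_prop)
      (Eventually.of_forall fun p => by finiteness) _ hS]
  exact setIntegral_congr_fun hS fun p hp => aux_pointwise g G π hg m l u xl xu hx p hp

lemma aux_change_int (g G : ℝ → ℝ) (π : ℝ × ℝ → ℝ) (hg : ∀ x, 0 ≤ g x) (hgm : Measurable g)
    (m l u : ℕ) (xl xu : ℝ) (hx : xl < xu)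
    (h : IntegrableOn (fun q : ℝ × ℝ => orderStatLik g G m l u q.1 q.2 xl xu * π q)
        {q : ℝ × ℝ | 0 < q.2}) :
    IntegrableOn (fun p : ℝ × ℝ => auxK m l u (G p.1) (G p.2) •
        (π (auxT xl (xu - xl) p) / (p.2 - p.1))) {p : ℝ × ℝ | p.1 < p.2}
        ((volume.withDensity fun x => ENNReal.ofReal (g x)).prod
          (volume.withDensity fun x => ENNReal.ofReal (g x))) := by
  have hS : MeasurableSet {p : ℝ × ℝ | p.1 < p.2} := measurableSet_lt measurable_fst measurable_snd
  rw [← auxT_image xl xu hx, integrableOn_image_iff_integrableOn_abs_det_fderiv_smul volume hS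
    (fun p hp => (auxT_hasFDerivAt xl (xu - xl) p hp).hasFDerivWithinAt) (auxT_injOn xl xu hx)] at h
  rw [prod_withDensity (by fun_prop) (by fun_prop), IntegrableOn, restrict_withDensity hS,
    integrable_withDensity_iff_integrable_smul' (by fun_prop)
      (Eventually.of_forall fun p => by finiteness)]
  exact h.congr_fun (fun p hp => aux_pointwise g G π hg m l u xl xu hx p hp) hS

lemma aux_mass (P : Measure ℝ) [IsProbabilityMeasure P] (G : ℝ → ℝ) (hGc : Continuous G)
    (hG : ∀ x, G x = P.real (Set.Iic x)) (hmono : Monotone G) (m l u : ℕ) (h1 : 1 ≤ l)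
    (h2 : l + 1 < u) (h3 : u ≤ m) :
    ∫ p in {p : ℝ × ℝ | p.1 < p.2}, auxK m l u (G p.1) (G p.2) ∂(P.prod P) = 1 := by
  have hS : MeasurableSet {p : ℝ × ℝ | p.1 < p.2} := measurableSet_lt measurable_fst measurable_snd
  have hsub : Prod.map G G ⁻¹' {p : ℝ × ℝ | p.1 < p.2} ⊆ {p : ℝ × ℝ | p.1 < p.2} := by
    intro p hp
    exact hmono.reflect_lt hp
  rw [setIntegral_eq_of_subset_of_forall_sdiff_eq_zero hS hsub]
  · have hmap : (P.prod P).map (Prod.map G G) =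
        (volume.restrict (Set.Icc (0:ℝ) 1)).prod (volume.restrict (Set.Icc (0:ℝ) 1)) := by
      rw [← aux_pit P G hGc hG, Measure.map_prod_map _ _ hGc.measurable hGc.measurable]
    have h := setIntegral_map (μ := P.prod P) (g := Prod.map G G)
      (f := fun q : ℝ × ℝ => auxK m l u q.1 q.2) hS
      (by
        apply Continuous.aestronglyMeasurable
        unfold auxK
        fun_prop) (by fun_prop)
    rw [hmap] at h
    simp only [Prod.map] at h
    refine Eq.trans h.symm ?_
    simp only [auxK]
    rw [integral_const_mul, aux_dirichlet]
    have e : l - 1 + (u - l - 1) + (m - u) + 2 = m := by omega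
    rw [e]
    have : (m.factorial : ℝ) ≠ 0 := by positivity
    field_simp
  · intro p hp
    have hp1 : p.1 < p.2 := hp.1
    have hp2 : ¬ (G p.1 < G p.2) := hp.2
    have hp3 : G p.2 - G p.1 = 0 := by
      have := hmono hp1.le
      linarith [not_lt.1 hp2]
    have : u - l - 1 ≠ 0 := by omega
    simp [auxK, hp3, this]

lemma aux_limits (l u : ℕ → ℕ) (pl pu : ℝ)
    (hlu : ∀ m : ℕ, 2 ≤ m → 1 ≤ l m ∧ l m < u m ∧ u m ≤ m)
    (hl_lim : Tendsto (fun m : ℕ => (l m : ℝ) / ((m : ℝ) + 1)) atTop (nhds pl))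
    (hu_lim : Tendsto (fun m : ℕ => (u m : ℝ) / ((m : ℝ) + 1)) atTop (nhds pu)) :
    Tendsto (fun m => ((l m - 1 : ℕ) : ℝ) /
      ((l m - 1 + (u m - l m - 1) + (m - u m) : ℕ) : ℝ)) atTop (nhds pl) ∧
    Tendsto (fun m => ((u m - l m - 1 : ℕ) : ℝ) /
      ((l m - 1 + (u m - l m - 1) + (m - u m) : ℕ) : ℝ)) atTop (nhds (pu - pl)) ∧
    Tendsto (fun m => ((m - u m : ℕ) : ℝ) /
      ((l m - 1 + (u m - l m - 1) + (m - u m) : ℕ) : ℝ)) atTop (nhds (1 - pu)) := by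
  have hinv : Tendsto (fun m : ℕ => ((m : ℝ) - 2)⁻¹) atTop (nhds 0) := by
    apply tendsto_inv_atTop_zero.comp
    exact tendsto_atTop_add_const_right _ (-2) tendsto_natCast_atTop_atTop
  have hratio : Tendsto (fun m : ℕ => 1 + 3 * ((m : ℝ) - 2)⁻¹) atTop (nhds 1) := by
    simpa using (hinv.const_mul 3).const_add 1
  have hL := (hl_lim.mul hratio).sub hinv
  have hM := ((hu_lim.sub hl_lim).mul hratio).sub hinv
  have hR := (hratio.sub (hu_lim.mul hratio)).sub hinv
  simp only [mul_one, sub_zero] at hL hM hR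
  have hcast : ∀ m : ℕ, 3 ≤ m → ((l m - 1 : ℕ) : ℝ) = l m - 1 ∧
      ((u m - l m - 1 : ℕ) : ℝ) = u m - l m - 1 ∧ ((m - u m : ℕ) : ℝ) = m - u m ∧
      ((l m - 1 + (u m - l m - 1) + (m - u m) : ℕ) : ℝ) = m - 2 ∧ (0:ℝ) < m - 2 := by
    intro m hm
    obtain ⟨a, b, c⟩ := hlu m (by omega)
    have e : l m - 1 + (u m - l m - 1) + (m - u m) = m - 2 := by omega
    refine ⟨by push_cast [a]; ring, ?_, by push_cast [c]; ring, ?_, ?_⟩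
    · rw [Nat.sub_sub, Nat.cast_sub (by omega)]; push_cast; ring
    · rw [e, Nat.cast_sub (by omega)]; push_cast; ring
    · have : (3:ℝ) ≤ m := by exact_mod_cast hm
      linarith
  refine ⟨hL.congr' ?_, hM.congr' ?_, hR.congr' ?_⟩ <;>
  · filter_upwards [eventually_ge_atTop 3] with m hm
    obtain ⟨e1, e2, e3, e4, e5⟩ := hcast m hm
    rw [e4]
    first | rw [e1] | rw [e2] | rw [e3]
    have : (m : ℝ) + 1 ≠ 0 := by positivity
    have := e5.ne'
    field_simp
    ring

/-- **Theorem 7 of the paper.** For a location–scale family built from a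
density `g` with cdf `G`, quantiles `G(q̲) = p̲`, `G(q̄) = p̄` with `0 < p̲ < p̄ < 1`,
`g` positive and continuous near `q̲` and `q̄`, a twice continuously differentiable
mixing density `π(μ, τ)` on `ℝ × (0,∞)` with integrable mixtures, and order-statistic
ranks `l_m/(m+1) → p̲`, `u_m/(m+1) → p̄`, the hierarchical generative density
`∫₀^∞∫_ℝ f⋆(x̲, x̄ | μ, τ, m, l_m, u_m) π(μ,τ) dμ dτ` converges, for every `x̲ < x̄`, to
`π(μ*, τ*)/(q̄ − q̲)` where `τ* = (x̄−x̲)/(q̄−q̲)` and `μ* = x̲ − τ*·q̲`. -/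
theorem hierarchical_generative_tendsto_descriptive
    (g : ℝ → ℝ) (hg_nonneg : ∀ x, 0 ≤ g x) (hg_meas : Measurable g)
    (hg_prob : ∫ x, g x = 1)
    (G : ℝ → ℝ) (hG : ∀ x, G x = ∫ t in Set.Iic x, g t)
    (pl pu : ℝ) (hpl : 0 < pl) (hplu : pl < pu) (hpu : pu < 1)
    (ql qu : ℝ) (hq : ql < qu) (hGl : G ql = pl) (hGu : G qu = pu)
    (hg_ql : ∃ U ∈ nhds ql, ContinuousOn g U ∧ ∀ x ∈ U, 0 < g x)
    (hg_qu : ∃ U ∈ nhds qu, ContinuousOn g U ∧ ∀ x ∈ U, 0 < g x)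
    (π : ℝ × ℝ → ℝ) (hπ_nonneg : ∀ q, 0 ≤ π q)
    (hπ_smooth : ContDiffOn ℝ 2 π {q : ℝ × ℝ | 0 < q.2})
    (hπ_prob : ∫ q in {q : ℝ × ℝ | 0 < q.2}, π q = 1)
    (hπ_int : ∀ (m l u : ℕ), 1 ≤ l → l < u → u ≤ m → ∀ xl xu : ℝ, xl ≤ xu →
      IntegrableOn (fun q : ℝ × ℝ => orderStatLik g G m l u q.1 q.2 xl xu * π q)
        {q : ℝ × ℝ | 0 < q.2})
    (l u : ℕ → ℕ) (hlu : ∀ m : ℕ, 2 ≤ m → 1 ≤ l m ∧ l m < u m ∧ u m ≤ m)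
    (hl_lim : Tendsto (fun m : ℕ => (l m : ℝ) / ((m : ℝ) + 1)) atTop (nhds pl))
    (hu_lim : Tendsto (fun m : ℕ => (u m : ℝ) / ((m : ℝ) + 1)) atTop (nhds pu)) :
    ∀ xl xu : ℝ, xl < xu →
      Tendsto
        (fun m : ℕ =>
          ∫ q in {q : ℝ × ℝ | 0 < q.2},
            orderStatLik g G m (l m) (u m) q.1 q.2 xl xu * π q)
        atTop
        (nhds (π (xl - ((xu - xl) / (qu - ql)) * ql, (xu - xl) / (qu - ql)) /
          (qu - ql))) := by
  intro xl xu hx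
  have hgi : Integrable g := integrable_of_integral_eq_one hg_prob
  set P : Measure ℝ := volume.withDensity fun x => ENNReal.ofReal (g x) with hP
  have hPset : ∀ s, MeasurableSet s → P s = ENNReal.ofReal (∫ x in s, g x) := by
    intro s hs
    rw [hP, withDensity_apply _ hs, ofReal_integral_eq_lintegral_ofReal hgi.integrableOn
      (Eventually.of_forall hg_nonneg)]
  have hprob : IsProbabilityMeasure P := ⟨by
    rw [hPset _ MeasurableSet.univ, setIntegral_univ, hg_prob]; simp⟩
  have hGP : ∀ x, G x = P.real (Set.Iic x) := by
    intro x
    rw [measureReal_def, hPset _ measurableSet_Iic, ← hG,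
      ENNReal.toReal_ofReal (by rw [hG]; exact integral_nonneg hg_nonneg)]
  have hdiff : ∀ a b, G b - G a = ∫ x in a..b, g x := by
    intro a b
    rw [hG, hG, intervalIntegral.integral_Iic_sub_Iic hgi.integrableOn hgi.integrableOn]
  have hGc : Continuous G := by
    have h := intervalIntegral.continuous_primitive (fun a b => hgi.intervalIntegrable) (0:ℝ)
    have : G = fun b => (∫ x in (0:ℝ)..b, g x) + G 0 := by
      ext b; rw [← hdiff]; ring
    rw [this]; exact h.add continuous_const
  have hmono : Monotone G := by
    intro a b hab
    rw [hGP, hGP]; exact measureReal_mono (Set.Iic_subset_Iic.2 hab)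
  have hG0 : ∀ x, 0 ≤ G x := fun x => by rw [hGP]; positivity
  have hG1 : ∀ x, G x ≤ 1 := fun x => by rw [hGP]; exact measureReal_le_one
  -- strict monotonicity near a quantile
  have hsep : ∀ q, (∃ U ∈ nhds q, ContinuousOn g U ∧ ∀ x ∈ U, 0 < g x) → ∀ ε > 0,
      ∃ δ > 0, ∀ z, ε ≤ |z - q| → δ ≤ |G z - G q| := by
    rintro q ⟨U, hU, hUc, hUp⟩ ε hε
    obtain ⟨r, hr, hrU⟩ := Metric.mem_nhds_iff.1 hU
    set e := min ε (r / 2) with he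
    have he0 : 0 < e := lt_min hε (by linarith)
    have her : e < r := (min_le_right _ _).trans_lt (by linarith)
    have hpos : ∀ a b, a < b → q - e ≤ a → b ≤ q + e → G a < G b := by
      intro a b hab ha hb
      have : 0 < ∫ x in a..b, g x := by
        refine intervalIntegral.intervalIntegral_pos_of_pos_on hgi.intervalIntegrable ?_ hab
        intro x hx
        refine hUp x (hrU ?_)
        rw [Metric.mem_ball, Real.dist_eq, abs_lt]
        constructor <;> linarith [hx.1, hx.2]
      linarith [hdiff a b]
    have h1 := hpos (q - e) q (by linarith) le_rfl (by linarith)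
    have h2 := hpos q (q + e) (by linarith) (by linarith) le_rfl
    refine ⟨min (G q - G (q - e)) (G (q + e) - G q), lt_min (by linarith) (by linarith), ?_⟩
    intro z hz
    have hez : e ≤ |z - q| := (min_le_left _ _).trans hz
    rcases le_abs.1 hez with h | h
    · refine (min_le_right _ _).trans (le_trans ?_ (le_abs_self _))
      have := hmono (show q + e ≤ z by linarith)
      linarith
    · refine (min_le_left _ _).trans (le_trans ?_ (neg_le_abs _))
      have := hmono (show z ≤ q - e by linarith)
      linarith
  have hS : MeasurableSet {p : ℝ × ℝ | p.1 < p.2} := measurableSet_lt measurable_fst measurable_snd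
  have hSo : IsOpen {p : ℝ × ℝ | p.1 < p.2} := isOpen_lt continuous_fst continuous_snd
  have hq0 : ((ql, qu) : ℝ × ℝ) ∈ {p : ℝ × ℝ | p.1 < p.2} := hq
  obtain ⟨hli, hlj, hlk⟩ := aux_limits l u pl pu hlu hl_lim hu_lim
  have hgap : ∀ᶠ m in atTop, l m + 1 < u m := by
    have h := hlj.eventually_const_lt (show (0:ℝ) < pu - pl by linarith)
    filter_upwards [h, eventually_ge_atTop 2] with m hm hm2
    by_contra hcon
    have : u m - l m - 1 = 0 := by omega
    rw [this] at hm
    simp at hm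
  simp_rw [aux_change g G π hg_nonneg hg_meas _ _ _ xl xu hx]
  refine tendsto_setIntegral_peak_smul_of_integrableOn_of_tendsto
    (φ := fun m p => auxK m (l m) (u m) (G p.1) (G p.2)) (x₀ := (ql, qu)) hS hS subset_rfl
    self_mem_nhdsWithin (measure_ne_top _ _) ?_ ?_ ?_ ?_ ?_ ?_
  · refine Eventually.of_forall fun m p hp => ?_
    have h1 := hG0 p.1
    have h2 : 0 ≤ G p.2 - G p.1 := sub_nonneg.2 (hmono (le_of_lt hp))
    have h3 : 0 ≤ 1 - G p.2 := sub_nonneg.2 (hG1 _)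
    unfold auxK
    positivity
  · intro V hV hqV
    obtain ⟨ε, hε, hεV⟩ := Metric.isOpen_iff.1 hV _ hqV
    obtain ⟨δ₁, hδ₁, hd₁⟩ := hsep ql hg_ql ε hε
    obtain ⟨δ₂, hδ₂, hd₂⟩ := hsep qu hg_qu ε hε
    rw [Metric.tendstoUniformlyOn_iff]
    intro η hη
    set δ := min (min δ₁ δ₂) (1 / 2) with hδ
    have hδ0 : 0 < δ := lt_min (lt_min hδ₁ hδ₂) (by norm_num)
    have hδ1 : δ < 1 := (min_le_right _ _).trans_lt (by norm_num)
    have hdec := aux_decay (fun m => l m - 1) (fun m => u m - l m - 1) (fun m => m - u m)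
      (by
        filter_upwards [eventually_ge_atTop 2] with m hm
        obtain ⟨a, b, c⟩ := hlu m hm
        omega) pl (pu - pl) (1 - pu) hpl (by linarith) (by linarith) (by ring)
      hli hlj hlk δ hδ0 hδ1 η hη
    filter_upwards [hdec] with m hm p hp
    have hpS : p.1 < p.2 := hp.1
    have h1 := hG0 p.1
    have h2 : 0 ≤ G p.2 - G p.1 := sub_nonneg.2 (hmono (le_of_lt hpS))
    have h3 : 0 ≤ 1 - G p.2 := sub_nonneg.2 (hG1 _)
    have hout : ε ≤ |p.1 - ql| ∨ ε ≤ |p.2 - qu| := by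
      by_contra hcon
      push Not at hcon
      apply hp.2
      apply hεV
      rw [Metric.mem_ball, Prod.dist_eq, Real.dist_eq, Real.dist_eq]
      exact max_lt hcon.1 hcon.2
    have hd : δ ≤ |G p.1 - pl| ∨ δ ≤ |(1 - G p.2) - (1 - pu)| := by
      rcases hout with h | h
      · left
        rw [← hGl]
        exact ((min_le_left _ _).trans (min_le_left _ _)).trans (hd₁ _ h)
      · right
        have e : (1 - G p.2) - (1 - pu) = -(G p.2 - G qu) := by rw [hGu]; ring
        rw [e, abs_neg]
        exact ((min_le_left _ _).trans (min_le_right _ _)).trans (hd₂ _ h)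
    have hfin := hm (G p.1) (G p.2 - G p.1) (1 - G p.2) h1 h2 h3 (by ring) hd
    have hnn : 0 ≤ auxK m (l m) (u m) (G p.1) (G p.2) := by
      unfold auxK
      positivity
    rw [Pi.zero_apply, dist_zero_left, Real.norm_eq_abs, abs_of_nonneg hnn]
    exact hfin
  · refine tendsto_const_nhds.congr' ?_
    filter_upwards [hgap, eventually_ge_atTop 2] with m hm hm2
    obtain ⟨a, b, c⟩ := hlu m hm2
    exact (aux_mass P G hGc hGP hmono m (l m) (u m) a hm c).symm
  · refine Eventually.of_forall fun m => ?_
    apply Continuous.aestronglyMeasurable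
    unfold auxK
    fun_prop
  · have h := aux_change_int g G π hg_nonneg hg_meas 2 1 2 xl xu hx
      (hπ_int 2 1 2 le_rfl (by norm_num) le_rfl xl xu hx.le)
    have h2 := h.const_mul (1 / 2 : ℝ)
    refine h2.congr (Eventually.of_forall fun p => ?_)
    simp [auxK]
  · have hcont : ContinuousAt (fun p : ℝ × ℝ => π (auxT xl (xu - xl) p) / (p.2 - p.1)) (ql, qu) := by
      have hne : qu - ql ≠ 0 := (sub_pos.2 hq).ne'
      refine ContinuousAt.div ?_ (by fun_prop) hne
      have hT : ContinuousAt (auxT xl (xu - xl)) (ql, qu) :=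
        (auxT_hasFDerivAt xl (xu - xl) (ql, qu) hq).continuousAt
      refine ContinuousAt.comp (g := π) ?_ hT
      refine hπ_smooth.continuousOn.continuousAt ?_
      refine (isOpen_lt continuous_const continuous_snd).mem_nhds ?_
      exact div_pos (sub_pos.2 hx) (sub_pos.2 hq)
    exact hcont.tendsto.mono_left nhdsWithin_le_nhds
end

section
/- Fix an integer p ≥ 1. Let P be a Borel probability measure on ℝ^{2p}, with coordinates written as (y̲₁, ȳ₁, …, y̲_p, ȳ_p), such that P({y : y̲_j ≤ ȳ_j for all j = 1,…,p}) = 1, and let F(x̲₁, x̄₁, …, x̲_p, x̄_p) := P({y : x̲_j ≤ y̲_j ≤ ȳ_j ≤ x̄_j for all j = 1,…,p}) be its containment distribution function. If F is 2p-times continuously differentiable on ℝ^{2p}, then P is absolutely continuous with respect to Lebesgue measure on ℝ^{2p} with density (−1)^p · ∂^{2p}F/∂x̲₁∂x̄₁⋯∂x̲_p∂x̄_p. -/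
open MeasureTheory

/-- Partial derivative of `F : 𝕀^p-coordinates → ℝ` with respect to the lower endpoint
of the `j`-th coordinate pair. -/
noncomputable def pderivLo {p : ℕ} (j : Fin p) (F : (Fin p → ℝ × ℝ) → ℝ)
    (x : Fin p → ℝ × ℝ) : ℝ :=
  deriv (fun t => F (Function.update x j (t, (x j).2))) (x j).1

/-- Partial derivative with respect to the upper endpoint of the `j`-th coordinate pair. -/
noncomputable def pderivHi {p : ℕ} (j : Fin p) (F : (Fin p → ℝ × ℝ) → ℝ)
    (x : Fin p → ℝ × ℝ) : ℝ :=
  deriv (fun t => F (Function.update x j ((x j).1, t))) (x j).2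

/-- The `2p`-th order mixed partial derivative `∂^{2p}F/∂x̲₁∂x̄₁⋯∂x̲_p∂x̄_p`. -/
noncomputable def mixedContainmentDeriv (p : ℕ) (F : (Fin p → ℝ × ℝ) → ℝ) :
    (Fin p → ℝ × ℝ) → ℝ :=
  (List.finRange p).foldr (fun j G => pderivLo j (pderivHi j G)) F

section Aux
open Set

lemma pLo_eq {p : ℕ} (j : Fin p) (F : (Fin p → ℝ × ℝ) → ℝ) (hF : Differentiable ℝ F)
    (x : Fin p → ℝ × ℝ) (t : ℝ) :
    HasDerivAt (fun t => F (Function.update x j (t, (x j).2)))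
      (fderiv ℝ F (Function.update x j (t, (x j).2)) (Pi.single j (1, 0))) t := by
  have h1 : HasDerivAt (fun t : ℝ => (t, (x j).2)) ((1 : ℝ), (0 : ℝ)) t :=
    (hasDerivAt_id t).prodMk (hasDerivAt_const t _)
  have h2 : HasDerivAt (fun t : ℝ => Function.update x j (t, (x j).2)) (Pi.single j (1, 0)) t := by
    have := (hasFDerivAt_update (𝕜 := ℝ) x (i := j) (t, (x j).2)).comp_hasDerivAt t h1
    refine this.congr_deriv ?_
    funext i
    by_cases h : i = j
    · subst h; simp
    · simp [h]
  exact (hF _).hasFDerivAt.comp_hasDerivAt t h2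

lemma pHi_eq {p : ℕ} (j : Fin p) (F : (Fin p → ℝ × ℝ) → ℝ) (hF : Differentiable ℝ F)
    (x : Fin p → ℝ × ℝ) (t : ℝ) :
    HasDerivAt (fun t => F (Function.update x j ((x j).1, t)))
      (fderiv ℝ F (Function.update x j ((x j).1, t)) (Pi.single j (0, 1))) t := by
  have h1 : HasDerivAt (fun t : ℝ => ((x j).1, t)) ((0 : ℝ), (1 : ℝ)) t :=
    (hasDerivAt_const t _).prodMk (hasDerivAt_id t)
  have h2 : HasDerivAt (fun t : ℝ => Function.update x j ((x j).1, t)) (Pi.single j (0, 1)) t := by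
    have := (hasFDerivAt_update (𝕜 := ℝ) x (i := j) ((x j).1, t)).comp_hasDerivAt t h1
    refine this.congr_deriv ?_
    funext i
    by_cases h : i = j
    · subst h; simp
    · simp [h]
  exact (hF _).hasFDerivAt.comp_hasDerivAt t h2

lemma pLo_fderiv {p : ℕ} (j : Fin p) (F : (Fin p → ℝ × ℝ) → ℝ) (hF : Differentiable ℝ F) :
    pderivLo j F = fun x => fderiv ℝ F x (Pi.single j (1, 0)) := by
  funext x
  have := (pLo_eq j F hF x (x j).1).deriv
  simpa [pderivLo] using this

lemma pHi_fderiv {p : ℕ} (j : Fin p) (F : (Fin p → ℝ × ℝ) → ℝ) (hF : Differentiable ℝ F) :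
    pderivHi j F = fun x => fderiv ℝ F x (Pi.single j (0, 1)) := by
  funext x
  have := (pHi_eq j F hF x (x j).2).deriv
  simpa [pderivHi] using this

lemma pLo_contDiff {p : ℕ} (j : Fin p) (F : (Fin p → ℝ × ℝ) → ℝ) (n : ℕ)
    (hF : ContDiff ℝ ((n + 1 : ℕ) : WithTop ℕ∞) F) : ContDiff ℝ (n : WithTop ℕ∞) (pderivLo j F) := by
  rw [pLo_fderiv j F (hF.differentiable (by simp))]
  exact (hF.fderiv_right (m := n) (by simp)).clm_apply contDiff_const

lemma pHi_contDiff {p : ℕ} (j : Fin p) (F : (Fin p → ℝ × ℝ) → ℝ) (n : ℕ)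
    (hF : ContDiff ℝ ((n + 1 : ℕ) : WithTop ℕ∞) F) : ContDiff ℝ (n : WithTop ℕ∞) (pderivHi j F) := by
  rw [pHi_fderiv j F (hF.differentiable (by simp))]
  exact (hF.fderiv_right (m := n) (by simp)).clm_apply contDiff_const

lemma foldr_contDiff {p : ℕ} (F : (Fin p → ℝ × ℝ) → ℝ) (l : List (Fin p)) : ∀ (n : ℕ)
    (_ : ContDiff ℝ ((n + 2 * l.length : ℕ) : WithTop ℕ∞) F),
    ContDiff ℝ (n : WithTop ℕ∞) (l.foldr (fun j G => pderivLo j (pderivHi j G)) F) := by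
  induction l with
  | nil => intro n h; simpa using h
  | cons a l ih =>
    intro n h
    rw [List.foldr_cons]
    apply pLo_contDiff
    apply pHi_contDiff
    apply ih
    rw [List.length_cons] at h
    rwa [show n + 1 + 1 + 2 * l.length = n + 2 * (l.length + 1) by ring]

lemma foldr_succ {p : ℕ} (F : (Fin (p + 1) → ℝ × ℝ) → ℝ) (c : ℝ × ℝ) (l : List (Fin p)) :
    (fun z : Fin p → ℝ × ℝ =>
      (l.map Fin.succ).foldr (fun j G => pderivLo j (pderivHi j G)) F
        (Fin.cons c z : Fin (p + 1) → ℝ × ℝ)) =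
    l.foldr (fun j G => pderivLo j (pderivHi j G))
      (fun z => F (Fin.cons c z : Fin (p + 1) → ℝ × ℝ)) := by
  induction l with
  | nil => rfl
  | cons a l ih =>
    rw [List.foldr_cons, ← ih, List.map_cons, List.foldr_cons]
    funext z
    simp only [pderivLo, pderivHi, ← Fin.cons_update, Fin.cons_succ]

lemma rect_integral {p : ℕ} (G : (Fin (p + 1) → ℝ × ℝ) → ℝ)
    (hG : ContDiff ℝ ((2 : ℕ) : WithTop ℕ∞) G) (z : Fin p → ℝ × ℝ) (a a' b b' : ℝ)
    (ha : a ≤ a') (hb : b ≤ b') :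
    ∫ c in Ico a a' ×ˢ Ioc b b', pderivLo 0 (pderivHi 0 G) (Fin.cons c z : Fin (p + 1) → ℝ × ℝ)
     = G (Fin.cons (a', b') z : Fin (p + 1) → ℝ × ℝ) - G (Fin.cons (a', b) z : Fin (p + 1) → ℝ × ℝ)
      - G (Fin.cons (a, b') z : Fin (p + 1) → ℝ × ℝ)
      + G (Fin.cons (a, b) z : Fin (p + 1) → ℝ × ℝ) := by
  have hH : ContDiff ℝ ((1 : ℕ) : WithTop ℕ∞) (pderivHi 0 G) := pHi_contDiff 0 G 1 hG
  have hK : Continuous (pderivLo 0 (pderivHi 0 G)) := (pLo_contDiff 0 _ 0 hH).continuous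
  have hcons : Continuous fun c : ℝ × ℝ => (Fin.cons c z : Fin (p + 1) → ℝ × ℝ) := by
    fun_prop
  have hGd := hG.differentiable (by simp)
  have hHd := hH.differentiable (by simp)
  have dLo : ∀ s t, HasDerivAt (fun s => pderivHi 0 G (Fin.cons (s, t) z : Fin (p + 1) → ℝ × ℝ))
      (pderivLo 0 (pderivHi 0 G) (Fin.cons (s, t) z : Fin (p + 1) → ℝ × ℝ)) s := by
    intro s t
    have := pLo_eq 0 _ hHd (Fin.cons (s, t) z) s
    rw [pLo_fderiv _ _ hHd]
    simpa using this
  have dHi : ∀ s t, HasDerivAt (fun t => G (Fin.cons (s, t) z : Fin (p + 1) → ℝ × ℝ))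
      (pderivHi 0 G (Fin.cons (s, t) z : Fin (p + 1) → ℝ × ℝ)) t := by
    intro s t
    have := pHi_eq 0 _ hGd (Fin.cons (s, t) z) t
    rw [pHi_fderiv _ _ hGd]
    simpa using this
  have hint : IntegrableOn (fun c : ℝ × ℝ => pderivLo 0 (pderivHi 0 G)
      (Fin.cons c z : Fin (p + 1) → ℝ × ℝ)) (Ico a a' ×ˢ Ioc b b') := by
    apply IntegrableOn.mono_set (t := Icc a a' ×ˢ Icc b b')
    · exact (hK.comp hcons).continuousOn.integrableOn_compact (isCompact_Icc.prod isCompact_Icc)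
    · exact prod_mono Ico_subset_Icc_self Ioc_subset_Icc_self
  have inner : ∀ t, ∫ s in Ico a a', pderivLo 0 (pderivHi 0 G)
      (Fin.cons (s, t) z : Fin (p + 1) → ℝ × ℝ) = pderivHi 0 G (Fin.cons (a', t) z : Fin (p + 1) → ℝ × ℝ)
        - pderivHi 0 G (Fin.cons (a, t) z : Fin (p + 1) → ℝ × ℝ) := by
    intro t
    rw [setIntegral_congr_set Ico_ae_eq_Ioc, ← intervalIntegral.integral_of_le ha]
    apply intervalIntegral.integral_eq_sub_of_hasDerivAt (fun s _ => dLo s t)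
    apply Continuous.intervalIntegrable
    exact hK.comp (hcons.comp (by fun_prop))
  have cH : ∀ s, Continuous fun t => pderivHi 0 G (Fin.cons (s, t) z : Fin (p + 1) → ℝ × ℝ) :=
    fun s => hH.continuous.comp (hcons.comp (by fun_prop))
  have outer : ∀ s, ∫ t in b..b', pderivHi 0 G (Fin.cons (s, t) z : Fin (p + 1) → ℝ × ℝ)
      = G (Fin.cons (s, b') z : Fin (p + 1) → ℝ × ℝ)
        - G (Fin.cons (s, b) z : Fin (p + 1) → ℝ × ℝ) := by
    intro s
    exact intervalIntegral.integral_eq_sub_of_hasDerivAt (fun t _ => dHi s t)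
      ((cH s).intervalIntegrable _ _)
  rw [Measure.volume_eq_prod] at hint ⊢
  rw [← Measure.prod_restrict, integral_prod_symm _ (by rwa [Measure.prod_restrict])]
  simp_rw [inner]
  rw [← intervalIntegral.integral_of_le hb, intervalIntegral.integral_sub
    ((cH _).intervalIntegrable _ _) ((cH _).intervalIntegrable _ _), outer, outer]
  ring

def obox {p : ℕ} (lo hi : Fin p → ℝ × ℝ) : Set (Fin p → ℝ × ℝ) :=
  univ.pi fun j => Ico (lo j).1 (hi j).1 ×ˢ Ioc (lo j).2 (hi j).2

lemma obox_meas {p : ℕ} (lo hi : Fin p → ℝ × ℝ) : MeasurableSet (obox lo hi) :=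
  MeasurableSet.univ_pi fun _ => measurableSet_Ico.prod measurableSet_Ioc

lemma obox_int {p : ℕ} (lo hi : Fin p → ℝ × ℝ) (f : (Fin p → ℝ × ℝ) → ℝ) (hf : Continuous f) :
    IntegrableOn f (obox lo hi) := by
  apply IntegrableOn.mono_set (t := univ.pi fun j => Icc (lo j).1 (hi j).1 ×ˢ Icc (lo j).2 (hi j).2)
  · exact hf.continuousOn.integrableOn_compact
      (isCompact_univ_pi fun _ => (isCompact_Icc.prod isCompact_Icc))
  · exact pi_mono fun i _ => prod_mono Ico_subset_Icc_self Ioc_subset_Icc_self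

lemma rect_meas (μ : Measure (ℝ × ℝ)) [IsFiniteMeasure μ] (a a' b b' : ℝ)
    (ha : a ≤ a') (hb : b ≤ b') :
    μ.real (Ico a a' ×ˢ Ioc b b') = μ.real (Ici a ×ˢ Iic b') - μ.real (Ici a' ×ˢ Iic b')
      - μ.real (Ici a ×ˢ Iic b) + μ.real (Ici a' ×ˢ Iic b) := by
  have h1 : ∀ s, MeasurableSet s →
      μ.real (s ×ˢ Iic b') = μ.real (s ×ˢ Iic b) + μ.real (s ×ˢ Ioc b b') := by
    intro s hs
    rw [← measureReal_union, ← prod_union, Iic_union_Ioc_eq_Iic hb]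
    · exact Disjoint.set_prod_right (Iic_disjoint_Ioc le_rfl) _ _
    · exact hs.prod measurableSet_Ioc
  have h2 : μ.real (Ici a ×ˢ Ioc b b') =
      μ.real (Ico a a' ×ˢ Ioc b b') + μ.real (Ici a' ×ˢ Ioc b b') := by
    rw [← measureReal_union, ← union_prod, Ico_union_Ici_eq_Ici ha]
    · refine Disjoint.set_prod_left ?_ _ _
      rw [Set.disjoint_left]; intro x hx hx'; exact absurd hx.2 (not_lt.2 hx')
    · exact measurableSet_Ici.prod measurableSet_Ioc
  have h3 := h1 _ (measurableSet_Ici (a := a))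
  have h4 := h1 _ (measurableSet_Ici (a := a'))
  linarith

lemma integral_four {α : Type*} [MeasurableSpace α] {μ : Measure α} {f₁ f₂ f₃ f₄ : α → ℝ}
    (h₁ : Integrable f₁ μ) (h₂ : Integrable f₂ μ) (h₃ : Integrable f₃ μ) (h₄ : Integrable f₄ μ) :
    ∫ x, f₁ x ∂μ - ∫ x, f₂ x ∂μ - ∫ x, f₃ x ∂μ + ∫ x, f₄ x ∂μ =
      ∫ x, (f₁ x - f₂ x - f₃ x + f₄ x) ∂μ := by
  have h12 : Integrable (fun x => f₁ x - f₂ x) μ := h₁.sub h₂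
  have h123 : Integrable (fun x => f₁ x - f₂ x - f₃ x) μ := h12.sub h₃
  rw [integral_add h123 h₄, integral_sub h12 h₃, integral_sub h₁ h₂]

lemma main_box (p : ℕ) : ∀ (P : Measure (Fin p → ℝ × ℝ)) [IsFiniteMeasure P]
    (F : (Fin p → ℝ × ℝ) → ℝ)
    (_ : ∀ x, F x = P.real {y | ∀ j, y j ∈ Ici (x j).1 ×ˢ Iic (x j).2})
    (_ : ContDiff ℝ ((2 * p : ℕ) : WithTop ℕ∞) F) (lo hi : Fin p → ℝ × ℝ)
    (_ : ∀ j, (lo j).1 ≤ (hi j).1 ∧ (lo j).2 ≤ (hi j).2),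
    P.real (obox lo hi) = ∫ x in obox lo hi, (-1 : ℝ) ^ p * mixedContainmentDeriv p F x := by
  induction p with
  | zero =>
    intro P _ F hF _ lo hi _
    have : obox lo hi = univ := by
      ext x; simp [obox]
    rw [this, Measure.restrict_univ, Measure.volume_pi_eq_dirac (x := fun j => j.elim0)]
    simp [mixedContainmentDeriv, hF]
  | succ p ih =>
    intro P _ F hF hs lo hi hle
    set B : Set (Fin p → ℝ × ℝ) := obox (Fin.tail lo) (Fin.tail hi) with hB
    have hBm : MeasurableSet B := obox_meas _ _
    set G : (Fin (p + 1) → ℝ × ℝ) → ℝ :=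
      ((List.finRange p).map Fin.succ).foldr (fun j G => pderivLo j (pderivHi j G)) F with hGdef
    have hG : ContDiff ℝ ((2 : ℕ) : WithTop ℕ∞) G := by
      apply foldr_contDiff
      simp only [List.length_map, List.length_finRange]
      rwa [show 2 + 2 * p = 2 * (p + 1) by ring]
    have hmixed : mixedContainmentDeriv (p + 1) F = pderivLo 0 (pderivHi 0 G) := by
      simp only [mixedContainmentDeriv, List.finRange_succ, List.foldr_cons, hGdef]
    have htail : Measurable (Fin.tail : (Fin (p + 1) → ℝ × ℝ) → (Fin p → ℝ × ℝ)) := by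
      apply measurable_pi_iff.2
      intro i
      exact measurable_pi_apply _
    have h0 : Measurable (fun y : Fin (p + 1) → ℝ × ℝ => y 0) := measurable_pi_apply 0
    have hQm : ∀ c : ℝ × ℝ, MeasurableSet (Ici c.1 ×ˢ Iic c.2) :=
      fun c => measurableSet_Ici.prod measurableSet_Iic
    have hconsC : Continuous fun q : (ℝ × ℝ) × (Fin p → ℝ × ℝ) =>
        (Fin.cons q.1 q.2 : Fin (p + 1) → ℝ × ℝ) := by
      fun_prop
    have key : ∀ c : ℝ × ℝ, P.real {y | y 0 ∈ Ici c.1 ×ˢ Iic c.2 ∧ Fin.tail y ∈ B} =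
        ∫ z in B, (-1 : ℝ) ^ p * G (Fin.cons c z : Fin (p + 1) → ℝ × ℝ) := by
      intro c
      let Pc : Measure (Fin p → ℝ × ℝ) :=
        (P.restrict {y | y 0 ∈ Ici c.1 ×ˢ Iic c.2}).map Fin.tail
      have hPc : ∀ A, MeasurableSet A →
          Pc.real A = P.real {y | y 0 ∈ Ici c.1 ×ˢ Iic c.2 ∧ Fin.tail y ∈ A} := by
        intro A hA
        simp only [Pc]
        rw [map_measureReal_apply htail hA, measureReal_restrict_apply (htail hA)]
        congr 1
        ext y
        simp only [mem_inter_iff, mem_preimage, mem_ofPred_eq]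
        tauto
      have h := ih Pc (fun z => F (Fin.cons c z : Fin (p + 1) → ℝ × ℝ)) ?_ ?_
        (Fin.tail lo) (Fin.tail hi) (fun j => hle j.succ)
      · rw [← hB, hPc B hBm] at h
        rw [h, mixedContainmentDeriv, ← foldr_succ]
      · intro x
        rw [hPc, hF]
        · congr 1
          ext y
          simp only [mem_ofPred_eq, Fin.forall_fin_succ, Fin.cons_zero, Fin.cons_succ, Fin.tail]
        · rw [show {y : Fin p → ℝ × ℝ | ∀ j, y j ∈ Ici (x j).1 ×ˢ Iic (x j).2} =
            univ.pi fun j => Ici (x j).1 ×ˢ Iic (x j).2 by ext; simp]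
          exact MeasurableSet.univ_pi fun j => hQm _
      · apply ContDiff.comp (hs.of_le _)
        · rw [contDiff_pi]
          intro i
          refine Fin.cases ?_ (fun i => ?_) i
          · simpa using contDiff_const
          · simpa using contDiff_apply ℝ (ℝ × ℝ) i
        · exact_mod_cast (by omega : 2 * p ≤ 2 * (p + 1))
    -- measure of the box
    let μ : Measure (ℝ × ℝ) := (P.restrict {y | Fin.tail y ∈ B}).map (fun y => y 0)
    have hμ : ∀ A, MeasurableSet A → μ.real A = P.real {y | y 0 ∈ A ∧ Fin.tail y ∈ B} := by
      intro A hA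
      simp only [μ]
      rw [map_measureReal_apply h0 hA, measureReal_restrict_apply (h0 hA)]
      rfl
    have hbox : P.real (obox lo hi) =
        μ.real (Ico (lo 0).1 (hi 0).1 ×ˢ Ioc (lo 0).2 (hi 0).2) := by
      rw [hμ _ (measurableSet_Ico.prod measurableSet_Ioc)]
      congr 1
      ext y
      simp only [obox, hB, mem_univ_pi, Fin.forall_fin_succ, mem_ofPred_eq, Fin.tail]
    have hint : ∀ c, IntegrableOn (fun z => (-1 : ℝ) ^ p * G (Fin.cons c z : Fin (p + 1) → ℝ × ℝ)) B := by
      intro c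
      apply obox_int
      exact continuous_const.mul (hG.continuous.comp
        (hconsC.comp (continuous_const.prodMk continuous_id)))
    have hμQ : ∀ a b, μ.real (Ici a ×ˢ Iic b) =
        ∫ z in B, (-1 : ℝ) ^ p * G (Fin.cons (a, b) z : Fin (p + 1) → ℝ × ℝ) := by
      intro a b
      rw [hμ _ (hQm (a, b)), ← key]
    rw [hbox, rect_meas _ _ _ _ _ (hle 0).1 (hle 0).2, hμQ, hμQ, hμQ, hμQ,
      integral_four (hint _) (hint _) (hint _) (hint _), hmixed]
    have hK : Continuous (pderivLo 0 (pderivHi 0 G)) :=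
      (pLo_contDiff 0 _ 0 (pHi_contDiff 0 G 1 hG)).continuous
    let e := (MeasurableEquiv.piFinSuccAbove (fun _ : Fin (p + 1) => ℝ × ℝ) 0).symm
    have he : MeasurePreserving e := (volume_preserving_piFinSuccAbove
      (fun _ : Fin (p + 1) => ℝ × ℝ) 0).symm
    have hee : ∀ q, e q = (Fin.cons q.1 q.2 : Fin (p + 1) → ℝ × ℝ) := by
      intro q
      simp [e, MeasurableEquiv.piFinSuccAbove]
      rfl
    have hpre : e ⁻¹' (obox lo hi) = (Ico (lo 0).1 (hi 0).1 ×ˢ Ioc (lo 0).2 (hi 0).2) ×ˢ B := by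
      ext q
      rw [mem_preimage, hee]
      simp only [obox, hB, mem_univ_pi, Fin.forall_fin_succ, mem_prod, Fin.tail, Fin.cons_zero,
        Fin.cons_succ]
    have hintK := obox_int lo hi (fun x => (-1 : ℝ) ^ (p + 1) * pderivLo 0 (pderivHi 0 G) x)
      (continuous_const.mul hK)
    rw [← he.integrableOn_comp_preimage e.measurableEmbedding, hpre] at hintK
    rw [← he.setIntegral_preimage_emb e.measurableEmbedding, hpre]
    rw [Measure.volume_eq_prod] at hintK ⊢
    rw [← Measure.prod_restrict, integral_prod_symm _ (by rw [Measure.prod_restrict]; exact hintK)]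
    congr 1
    funext z
    simp only [hee]
    rw [integral_const_mul, rect_integral G hG z _ _ _ _ (hle 0).1 (hle 0).2, pow_succ]
    ring

lemma span_Ico : IsCountablySpanning {S : Set ℝ | ∃ l u, l < u ∧ Ico l u = S} := by
  refine ⟨fun n : ℕ => Ico (-(n : ℝ) - 1) (n + 1), fun n => ⟨_, _, ?_, rfl⟩, ?_⟩
  · have : (0 : ℝ) ≤ n := Nat.cast_nonneg n
    linarith
  · rw [eq_univ_iff_forall]
    intro x
    obtain ⟨n, hn⟩ := exists_nat_ge |x|
    have := abs_le.1 hn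
    exact mem_iUnion.2 ⟨n, by linarith, by linarith⟩

lemma span_Ioc : IsCountablySpanning {S : Set ℝ | ∃ l u, l < u ∧ Ioc l u = S} := by
  refine ⟨fun n : ℕ => Ioc (-(n : ℝ) - 1) (n + 1), fun n => ⟨_, _, ?_, rfl⟩, ?_⟩
  · have : (0 : ℝ) ≤ n := Nat.cast_nonneg n
    linarith
  · rw [eq_univ_iff_forall]
    intro x
    obtain ⟨n, hn⟩ := exists_nat_ge |x|
    have := abs_le.1 hn
    exact mem_iUnion.2 ⟨n, by linarith, by linarith⟩

lemma ext_obox {p : ℕ} (P ν : Measure (Fin p → ℝ × ℝ)) [IsFiniteMeasure P]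
    (h : ∀ lo hi : Fin p → ℝ × ℝ, (∀ j, (lo j).1 ≤ (hi j).1 ∧ (lo j).2 ≤ (hi j).2) →
      P (obox lo hi) = ν (obox lo hi)) : P = ν := by
  let C2 : Set (Set (ℝ × ℝ)) := image2 (· ×ˢ ·) {S : Set ℝ | ∃ l u, l < u ∧ Ico l u = S}
    {S : Set ℝ | ∃ l u, l < u ∧ Ioc l u = S}
  have hC2 : IsCountablySpanning C2 := span_Ico.prod span_Ioc
  have hg2 : MeasurableSpace.generateFrom C2 = (inferInstance : MeasurableSpace (ℝ × ℝ)) := by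
    apply generateFrom_eq_prod _ _ span_Ico span_Ioc
    · rw [← borel_eq_generateFrom_Ico]; exact (BorelSpace.measurable_eq (α := ℝ)).symm
    · rw [← borel_eq_generateFrom_Ioc]; exact (BorelSpace.measurable_eq (α := ℝ)).symm
  have hpi2 : IsPiSystem C2 := (isPiSystem_Ico id id).prod (isPiSystem_Ioc id id)
  obtain ⟨B, hB, hBu⟩ := IsCountablySpanning.pi (fun _ : Fin p => hC2)
  refine Measure.ext_of_generateFrom_of_iUnion _ B
    (generateFrom_eq_pi (fun _ : Fin p => hg2) (fun _ => hC2)).symm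
    (IsPiSystem.pi fun _ => hpi2) hBu hB (fun i => measure_ne_top _ _) ?_
  rintro _ ⟨s, hs, rfl⟩
  have : ∀ j, ∃ l u : ℝ × ℝ, l.1 ≤ u.1 ∧ l.2 ≤ u.2 ∧ Ico l.1 u.1 ×ˢ Ioc l.2 u.2 = s j := by
    intro j
    obtain ⟨_, ⟨a, a', ha, rfl⟩, _, ⟨b, b', hb, rfl⟩, hh⟩ := hs j (mem_univ j)
    exact ⟨(a, b), (a', b'), ha.le, hb.le, hh⟩
  choose lo hi h1 h2 h3 using this
  have := h lo hi fun j => ⟨h1 j, h2 j⟩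
  simpa only [obox, h3] using this

lemma nonneg_of_obox {p : ℕ} (g : (Fin p → ℝ × ℝ) → ℝ) (hg : Continuous g)
    (h : ∀ lo hi : Fin p → ℝ × ℝ, (∀ j, (lo j).1 ≤ (hi j).1 ∧ (lo j).2 ≤ (hi j).2) →
      0 ≤ ∫ x in obox lo hi, g x) (x : Fin p → ℝ × ℝ) : 0 ≤ g x := by
  by_contra! hx
  have hU : {y | g y < g x / 2} ∈ nhds x :=
    (isOpen_lt hg continuous_const).mem_nhds (by simp only [mem_ofPred_eq]; linarith)
  obtain ⟨ε, hε, hball⟩ := Metric.mem_nhds_iff.1 hU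
  let lo : Fin p → ℝ × ℝ := fun j => ((x j).1 - ε / 2, (x j).2 - ε / 2)
  let hi : Fin p → ℝ × ℝ := fun j => ((x j).1 + ε / 2, (x j).2 + ε / 2)
  have hsub : obox lo hi ⊆ {y | g y < g x / 2} := by
    intro y hy
    apply hball
    rw [Metric.mem_ball, dist_pi_lt_iff hε]
    intro j
    have := hy j (mem_univ j)
    simp only [lo, hi, mem_prod, mem_Ico, mem_Ioc] at this
    rw [Prod.dist_eq, max_lt_iff, Real.dist_eq, Real.dist_eq, abs_lt, abs_lt]
    refine ⟨⟨?_, ?_⟩, ?_, ?_⟩ <;> linarith [this.1.1, this.1.2, this.2.1, this.2.2]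
  have hnh : obox lo hi ∈ nhds x := by
    apply set_pi_mem_nhds finite_univ
    intro j _
    apply prod_mem_nhds
    · exact Ico_mem_nhds (by simp only [lo]; linarith) (by simp only [hi]; linarith)
    · exact Ioc_mem_nhds (by simp only [lo]; linarith) (by simp only [hi]; linarith)
  have hpos := Measure.measure_pos_of_mem_nhds (volume : Measure (Fin p → ℝ × ℝ)) hnh
  have hfin : volume (obox lo hi) ≠ ⊤ := by
    have := obox_int lo hi (fun _ => (1 : ℝ)) continuous_const
    rw [integrableOn_const_iff] at this
    simpa [lt_top_iff_ne_top] using this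
  have h1 : ∫ y in obox lo hi, g y ≤ ∫ y in obox lo hi, g x / 2 :=
    setIntegral_mono_on (obox_int _ _ _ hg) (obox_int _ _ _ continuous_const) (obox_meas _ _)
      fun y hy => (hsub hy).le
  rw [setIntegral_const, smul_eq_mul] at h1
  have h2 : 0 < volume.real (obox lo hi) := ENNReal.toReal_pos hpos.ne' hfin
  have h3 := h lo hi fun j => ⟨by simp only [lo, hi]; linarith, by simp only [lo, hi]; linarith⟩
  nlinarith

end Aux

/-- **Theorem 8 of the paper.** Let `P` be a Borel probability measure on
`ℝ^{2p}` (coordinates grouped as endpoint pairs `(y̲_j, ȳ_j)`) giving full mass to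
`{y : y̲_j ≤ ȳ_j ∀j}`, with containment distribution function
`F(x) = P({y : x̲_j ≤ y̲_j ≤ ȳ_j ≤ x̄_j ∀j})`. If `F` is `2p`-times continuously
differentiable, then `P` is absolutely continuous w.r.t. Lebesgue measure with density
`(−1)^p ∂^{2p}F/∂x̲₁∂x̄₁⋯∂x̲_p∂x̄_p`. -/
theorem containment_cdf_density_hypercube (p : ℕ) (hp : 1 ≤ p)
    (P : Measure (Fin p → ℝ × ℝ)) [IsProbabilityMeasure P]
    (hsupp : P {y : Fin p → ℝ × ℝ | ∀ j, (y j).1 ≤ (y j).2} = 1)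
    (F : (Fin p → ℝ × ℝ) → ℝ)
    (hF : ∀ x : Fin p → ℝ × ℝ,
      F x = (P {y : Fin p → ℝ × ℝ |
        ∀ j, (x j).1 ≤ (y j).1 ∧ (y j).1 ≤ (y j).2 ∧ (y j).2 ≤ (x j).2}).toReal)
    (hsmooth : ContDiff ℝ (2 * p) F) :
    P ≪ volume ∧
      P = volume.withDensity fun x : Fin p → ℝ × ℝ =>
        ENNReal.ofReal ((-1 : ℝ) ^ p * mixedContainmentDeriv p F x) := by
  have hF' : ∀ x, F x = P.real {y | ∀ j, y j ∈ Set.Ici (x j).1 ×ˢ Set.Iic (x j).2} := by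
    intro x
    rw [hF, Measure.real]
    congr 1
    have hae : ∀ᵐ y ∂P, ∀ j, (y j).1 ≤ (y j).2 := by
      have hm : MeasurableSet {y : Fin p → ℝ × ℝ | ∀ j, (y j).1 ≤ (y j).2} := by
        rw [Set.ofPred_forall]
        exact MeasurableSet.iInter fun j =>
          measurableSet_le (by fun_prop) (by fun_prop)
      exact (prob_compl_eq_zero_iff hm).2 hsupp
    apply measure_congr
    filter_upwards [hae] with y hy
    apply propext
    change (∀ j, _) ↔ (∀ j, _)
    refine forall_congr' fun j => ?_
    simp only [Set.mem_prod, Set.mem_Ici, Set.mem_Iic]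
    have := hy j
    tauto
  have hsm : ContDiff ℝ ((2 * p : ℕ) : WithTop ℕ∞) F := by
    push_cast
    exact hsmooth
  have hbox := main_box p P F hF' hsm
  have hcont : Continuous fun x => (-1 : ℝ) ^ p * mixedContainmentDeriv p F x := by
    refine continuous_const.mul ?_
    refine (foldr_contDiff F (List.finRange p) 0 ?_).continuous
    simpa using hsmooth
  have hnn := nonneg_of_obox _ hcont fun lo hi h => by
    rw [← hbox lo hi h]; exact measureReal_nonneg
  have hmain : P = volume.withDensity fun x : Fin p → ℝ × ℝ =>
        ENNReal.ofReal ((-1 : ℝ) ^ p * mixedContainmentDeriv p F x) := by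
    apply ext_obox
    intro lo hi h
    rw [withDensity_apply _ (obox_meas _ _), ← ofReal_integral_eq_lintegral_ofReal
      (obox_int _ _ _ hcont) (Filter.Eventually.of_forall hnn), ← hbox lo hi h,
      ofReal_measureReal]
  refine ⟨?_, hmain⟩
  rw [hmain]
  exact withDensity_absolutelyContinuous _ _
end
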